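/- arXiv:1404.5999 — 2 statements merged into one kernel-verified Lean document; each statement's English description precedes it below -/
import Mathlib

section
/- Let n ≥ 1, let x ∈ (0,1), and let ρ₁, ρ₂ be density matrices (n×n complex positive semidefinite matrices of trace 1), and set ρ_Av := x·ρ₁ + (1−x)·ρ₂. Then S(ρ_Av) − x·S(ρ₁) − (1−x)·S(ρ₂) ≥ (1/2)·x·(1−x)·‖ρ₁ − ρ₂‖₁². -/
open Matrix ComplexOrder

/-- Apply a real function to a Hermitian matrix via the spectral decomposition
`A = U D U*`: the result is `U (f(D)) U*` where `f` acts on the diagonal. -/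
noncomputable def mfun {m : Type*} [Fintype m] [DecidableEq m]
    (f : ℝ → ℝ) (A : Matrix m m ℂ) : Matrix m m ℂ :=
  if hA : A.IsHermitian then hA.cfc f else 0

/-- Matrix logarithm via spectral decomposition, with the convention `log 0 = 0`
(note `Real.log 0 = 0`). -/
noncomputable def matLog {m : Type*} [Fintype m] [DecidableEq m]
    (A : Matrix m m ℂ) : Matrix m m ℂ :=
  mfun Real.log A

/-- The positive semidefinite square root of a positive semidefinite matrix,
via spectral decomposition. -/
noncomputable def matSqrt {m : Type*} [Fintype m] [DecidableEq m]
    (A : Matrix m m ℂ) : Matrix m m ℂ :=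
  mfun Real.sqrt A

/-- Real power of a (positive semidefinite / positive definite) matrix via spectral
decomposition. -/
noncomputable def matRpow {m : Type*} [Fintype m] [DecidableEq m]
    (t : ℝ) (A : Matrix m m ℂ) : Matrix m m ℂ :=
  mfun (fun u => u ^ t) A

/-- The von Neumann entropy `S(ρ) = -Tr(ρ log ρ)`. -/
noncomputable def vnEntropy {m : Type*} [Fintype m] [DecidableEq m]
    (ρ : Matrix m m ℂ) : ℝ :=
  -(Matrix.trace (ρ * matLog ρ)).re

/-- The quantum relative entropy `H(ρ, γ) = Tr(ρ (log ρ - log γ))`. -/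
noncomputable def relEntropy {m : Type*} [Fintype m] [DecidableEq m]
    (ρ γ : Matrix m m ℂ) : ℝ :=
  (Matrix.trace (ρ * (matLog ρ - matLog γ))).re

/-- The trace norm of a Hermitian matrix: the sum of the absolute values of its
eigenvalues. -/
noncomputable def traceNorm {m : Type*} [Fintype m] [DecidableEq m]
    (A : Matrix m m ℂ) : ℝ :=
  if hA : A.IsHermitian then ∑ i, |hA.eigenvalues i| else 0

/-- A density matrix: positive semidefinite with trace 1. -/
def IsDensity {m : Type*} [Fintype m] [DecidableEq m] (ρ : Matrix m m ℂ) : Prop :=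
  ρ.PosSemidef ∧ Matrix.trace ρ = 1

/-- The binary entropy `h(x) = -x log x - (1-x) log (1-x)`. -/
noncomputable def binEntropy (x : ℝ) : ℝ :=
  -(x * Real.log x) - (1 - x) * Real.log (1 - x)

/-- The Renyi relative entropy `H_a(ρ,γ) = (a-1)⁻¹ log Tr(ρ^a γ^(1-a))`. -/
noncomputable def renyiRel {m : Type*} [Fintype m] [DecidableEq m]
    (a : ℝ) (ρ γ : Matrix m m ℂ) : ℝ :=
  (a - 1)⁻¹ * Real.log (Matrix.trace (matRpow a ρ * matRpow (1 - a) γ)).re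

/-- The sandwiched Renyi relative entropy
`H̃_a(ρ,γ) = (a-1)⁻¹ log Tr((γ^((1-a)/(2a)) ρ γ^((1-a)/(2a)))^a)`. -/
noncomputable def sandRenyiRel {m : Type*} [Fintype m] [DecidableEq m]
    (a : ℝ) (ρ γ : Matrix m m ℂ) : ℝ :=
  (a - 1)⁻¹ * Real.log
    (Matrix.trace (matRpow a
      (matRpow ((1 - a) / (2 * a)) γ * ρ * matRpow ((1 - a) / (2 * a)) γ))).re

/-!
Diagonalise `A` and `B`. In their eigenbases `aᵢ`, `bⱼ` the difference `A - B` has the entries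
`(pᵢ - qⱼ) ⟨aᵢ, bⱼ⟩`, and `‖A - B‖₁ = Tr G (A - B)` for a unitary `G`, the sign of `A - B`. The
squared moduli of the entries of a unitary matrix are doubly stochastic, so the scalar inequality
`3 (p - q)² ≤ (p (log p - log q) - p + q) (2 p + 4 q)` and Cauchy–Schwarz give the quantum Pinsker
inequality `‖A - B‖₁² ≤ 2 H(A, B)` for density matrices.

The entropy gap of a mixture `γ = x ρ₁ + (1 - x) ρ₂` is `x H(ρ₁, γ) + (1 - x) H(ρ₂, γ)`, and
`ρ₁ - γ = (1 - x) (ρ₁ - ρ₂)`, `ρ₂ - γ = x (ρ₂ - ρ₁)`.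
-/

section ScalarDivergence

-- This is `3 (t - 1)² ≤ (t log t - t + 1) (2 t + 4)` solved for `log t`.
lemma div_le_log_of_pos {t : ℝ} (ht : 0 < t) :
    (t - 1) * (5 * t + 1) / (2 * t * (t + 2)) ≤ Real.log t := by
  set gap : ℝ → ℝ := fun s => Real.log s - (s - 1) * (5 * s + 1) / (2 * s * (s + 2)) with gap_def
  have hasDerivAt_gap {s : ℝ} (hs : 0 < s) :
      HasDerivAt gap ((s - 1) ^ 3 / (s ^ 2 * (s + 2) ^ 2)) s := by
    have numerator : HasDerivAt (fun s : ℝ => (s - 1) * (5 * s + 1))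
        (1 * (5 * s + 1) + (s - 1) * (5 * 1)) s :=
      ((hasDerivAt_id s).sub_const 1).mul (((hasDerivAt_id s).const_mul 5).add_const 1)
    have denominator : HasDerivAt (fun s : ℝ => 2 * s * (s + 2))
        (2 * 1 * (s + 2) + 2 * s * 1) s :=
      ((hasDerivAt_id s).const_mul 2).mul ((hasDerivAt_id s).add_const 2)
    refine ((Real.hasDerivAt_log hs.ne').sub
      (numerator.div denominator (by positivity))).congr_deriv ?_
    field_simp
    ring
  have isMinOn_gap : IsMinOn gap (Set.Ioi 0) 1 := by
    refine isMinOn_Ioi_of_deriv (hasDerivAt_gap one_pos).continuousAt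
      (fun s hs => (hasDerivAt_gap hs.1).differentiableAt.differentiableWithinAt)
      (fun s hs => (hasDerivAt_gap (one_pos.trans hs)).differentiableAt.differentiableWithinAt)
      (fun s hs => ?_) (fun s hs => ?_)
    · rw [(hasDerivAt_gap hs.1).deriv]
      exact div_nonpos_of_nonpos_of_nonneg
        (Odd.pow_nonpos (by decide) (sub_nonpos.2 hs.2.le)) (by positivity)
    · rw [(hasDerivAt_gap (one_pos.trans hs)).deriv]
      exact div_nonneg (pow_nonneg (sub_nonneg.2 (le_of_lt hs)) 3) (by positivity)
  have gap_nonneg : gap 1 ≤ gap t := isMinOn_gap ht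
  simpa [gap_def] using gap_nonneg

/-- The Bregman divergence of `u ↦ u log u`, that is, the contribution of a pair of weights to the
relative entropy of unnormalised measures. Since `Real.log 0 = 0`, its value at `q = 0 < p` is
finite instead of `+∞`. -/
noncomputable def entropyDivergence (p q : ℝ) : ℝ :=
  p * (Real.log p - Real.log q) - p + q

variable {p q : ℝ}

lemma sq_sub_le_entropyDivergence_mul (hp : 0 ≤ p) (hq : 0 ≤ q) (hpq : q = 0 → p = 0) :
    (p - q) ^ 2 ≤ entropyDivergence p q * ((2 * p + 4 * q) / 3) := by
  unfold entropyDivergence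
  rcases hq.eq_or_lt' with rfl | hq
  · simp [hpq rfl]
  rcases hp.eq_or_lt' with rfl | hp
  · nlinarith
  have log_bound := div_le_log_of_pos (div_pos hp hq)
  have clear_quotient : (p / q - 1) * (5 * (p / q) + 1) / (2 * (p / q) * (p / q + 2))
      = (p - q) * (5 * p + q) / (2 * p * (p + 2 * q)) := by
    field_simp
  rw [Real.log_div hp.ne' hq.ne', clear_quotient, div_le_iff₀ (by positivity)] at log_bound
  nlinarith

lemma entropyDivergence_nonneg (hp : 0 ≤ p) (hq : 0 ≤ q) (hpq : q = 0 → p = 0) :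
    0 ≤ entropyDivergence p q := by
  rcases hq.eq_or_lt' with rfl | hq
  · simp [entropyDivergence, hpq rfl]
  · exact nonneg_of_mul_nonneg_left
      ((sq_nonneg _).trans (sq_sub_le_entropyDivergence_mul hp hq.le hpq)) (by positivity)

end ScalarDivergence

variable {m : Type*} [Fintype m]

lemma mulVec_eq_zero_of_posSemidef_add {𝕜 : Type*} [RCLike 𝕜] {A B : Matrix m m 𝕜}
    (hA : A.PosSemidef) (hB : B.PosSemidef) {v : m → 𝕜} (hv : (A + B) *ᵥ v = 0) : A *ᵥ v = 0 := by
  have quadratic_forms : star v ⬝ᵥ A *ᵥ v + star v ⬝ᵥ B *ᵥ v = 0 := by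
    rw [← dotProduct_add, ← add_mulVec, hv, dotProduct_zero]
  refine (hA.dotProduct_mulVec_zero_iff v).1 ?_
  exact ((add_eq_zero_iff_of_nonneg (hA.dotProduct_mulVec_nonneg v)
    (hB.dotProduct_mulVec_nonneg v)).1 quadratic_forms).1

variable [DecidableEq m]

section UnitaryMatrices

variable {𝕜 : Type*} [RCLike 𝕜]

lemma sum_norm_sq_row_of_mem_unitaryGroup {C : Matrix m m 𝕜} (hC : C ∈ unitaryGroup m 𝕜) (i : m) :
    ∑ j, ‖C i j‖ ^ 2 = 1 := by
  have diagonal_entry := congrFun₂ (mem_unitaryGroup_iff.1 hC) i i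
  simp only [mul_apply, star_apply, one_apply_eq, RCLike.star_def, RCLike.mul_conj]
    at diagonal_entry
  exact_mod_cast diagonal_entry

lemma map_norm_sq_mem_doublyStochastic {C : Matrix m m 𝕜} (hC : C ∈ unitaryGroup m 𝕜) :
    C.map (‖·‖ ^ 2) ∈ doublyStochastic ℝ m := by
  refine mem_doublyStochastic_iff_sum.2 ⟨fun i j => ?_, fun i => ?_, fun j => ?_⟩
  · exact sq_nonneg _
  · exact sum_norm_sq_row_of_mem_unitaryGroup hC i
  · simpa [star_apply] using sum_norm_sq_row_of_mem_unitaryGroup (Unitary.star_mem hC) j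

lemma sum_norm_sq_mul_add {C : Matrix m m 𝕜} (hC : C ∈ unitaryGroup m 𝕜) (f g : m → ℝ) :
    ∑ i, ∑ j, ‖C i j‖ ^ 2 * (f i + g j) = ∑ i, f i + ∑ j, g j := by
  have hC' := map_norm_sq_mem_doublyStochastic hC
  have rows (i : m) : ∑ j, ‖C i j‖ ^ 2 = 1 := sum_row_of_mem_doublyStochastic hC' i
  have cols (j : m) : ∑ i, ‖C i j‖ ^ 2 = 1 := sum_col_of_mem_doublyStochastic hC' j
  simp only [mul_add, Finset.sum_add_distrib]
  rw [Finset.sum_comm (f := fun i j => ‖C i j‖ ^ 2 * g j)]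
  simp only [← Finset.sum_mul, rows, cols, one_mul]

lemma sq_norm_sum_sub_mul_le {C K : Matrix m m 𝕜} (hK : K ∈ unitaryGroup m 𝕜) {p q : m → ℝ}
    (hp : ∀ i, 0 ≤ p i) (hq : ∀ j, 0 ≤ q j) (hpq : ∀ i j, q j = 0 → p i = 0 ∨ C i j = 0) :
    ‖∑ i, ∑ j, ((p i - q j : ℝ) : 𝕜) * C i j * K j i‖ ^ 2 ≤
      (∑ i, ∑ j, ‖C i j‖ ^ 2 * entropyDivergence (p i) (q j)) *
        ((2 * ∑ i, p i + 4 * ∑ j, q j) / 3) := by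
  have triangle : ‖∑ i, ∑ j, ((p i - q j : ℝ) : 𝕜) * C i j * K j i‖ ≤
      ∑ i, ∑ j, |p i - q j| * ‖C i j‖ * ‖K j i‖ := by
    refine norm_sum_le_of_le _ fun i _ => norm_sum_le_of_le _ fun j _ => ?_
    rw [norm_mul, norm_mul, RCLike.norm_ofReal]
  have weight_sum : ∑ i, ∑ j, ‖K j i‖ ^ 2 * ((2 * p i + 4 * q j) / 3) =
      (2 * ∑ i, p i + 4 * ∑ j, q j) / 3 := by
    have := sum_norm_sq_mul_add hK (fun j => 4 / 3 * q j) (fun i => 2 / 3 * p i)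
    rw [Finset.sum_comm, ← Finset.mul_sum, ← Finset.mul_sum] at this
    convert this using 1
    · refine Finset.sum_congr rfl fun i _ => Finset.sum_congr rfl fun j _ => ?_
      ring
    · ring
  have divergence_nonneg (i j : m) : 0 ≤ ‖C i j‖ ^ 2 * entropyDivergence (p i) (q j) := by
    by_cases hC : C i j = 0
    · simp [hC]
    · exact mul_nonneg (sq_nonneg _)
        (entropyDivergence_nonneg (hp i) (hq j) fun h => (hpq i j h).resolve_right hC)
  have termwise (i j : m) : (|p i - q j| * ‖C i j‖ * ‖K j i‖) ^ 2 ≤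
      ‖C i j‖ ^ 2 * entropyDivergence (p i) (q j) *
        (‖K j i‖ ^ 2 * ((2 * p i + 4 * q j) / 3)) := by
    by_cases hC : C i j = 0
    · simp [hC]
    · have := mul_le_mul_of_nonneg_left (sq_sub_le_entropyDivergence_mul (hp i) (hq j)
        fun h => (hpq i j h).resolve_right hC) (mul_nonneg (sq_nonneg ‖C i j‖) (sq_nonneg ‖K j i‖))
      rw [mul_pow, mul_pow, sq_abs]
      linarith
  have cauchy_schwarz := Finset.sum_sq_le_sum_mul_sum_of_sq_le_mul (Finset.univ : Finset (m × m))
    (r := fun x => |p x.1 - q x.2| * ‖C x.1 x.2‖ * ‖K x.2 x.1‖)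
    (fun x _ => divergence_nonneg x.1 x.2)
    (fun x _ => mul_nonneg (sq_nonneg _) (by linarith [hp x.1, hq x.2]))
    (fun x _ => termwise x.1 x.2)
  simp only [Fintype.sum_prod_type] at cauchy_schwarz
  rw [weight_sum] at cauchy_schwarz
  exact (pow_le_pow_left₀ (norm_nonneg _) triangle 2).trans cauchy_schwarz

end UnitaryMatrices

section FunctionalCalculus

lemma mfun_eq_cfc (f : ℝ → ℝ) (A : Matrix m m ℂ) : mfun f A = cfc f A := by
  by_cases hA : A.IsHermitian
  · rw [mfun, dif_pos hA, hA.cfc_eq]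
  · exact (dif_neg hA).trans (cfc_apply_of_not_predicate A hA).symm

lemma continuousOn_spectrum (f : ℝ → ℝ) (A : Matrix m m ℂ) : ContinuousOn f (spectrum ℝ A) :=
  A.finite_real_spectrum.continuousOn f

lemma mfun_mul_mfun (f g : ℝ → ℝ) (A : Matrix m m ℂ) :
    mfun f A * mfun g A = mfun (fun u => f u * g u) A := by
  simp only [mfun_eq_cfc]
  exact (cfc_mul f g A (continuousOn_spectrum f A) (continuousOn_spectrum g A)).symm

variable {A B : Matrix m m ℂ}

lemma mfun_id (hA : A.IsHermitian) : mfun id A = A := by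
  rw [mfun_eq_cfc, cfc_id ℝ A hA.isSelfAdjoint]

lemma mfun_eq_conj_diagonal (hA : A.IsHermitian) (f : ℝ → ℝ) :
    mfun f A = hA.eigenvectorUnitary * diagonal (fun i => (f (hA.eigenvalues i) : ℂ)) *
      star (hA.eigenvectorUnitary : Matrix m m ℂ) := by
  rw [mfun, dif_pos hA]
  exact Unitary.conjStarAlgAut_apply _ _

lemma trace_mfun (hA : A.IsHermitian) (f : ℝ → ℝ) :
    (mfun f A).trace = ∑ i, (f (hA.eigenvalues i) : ℂ) := by
  rw [mfun_eq_conj_diagonal hA, trace_mul_cycle, Unitary.coe_star_mul_self, one_mul,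
    trace_diagonal]

/-- The matrix of inner products between the eigenbases of `A` and `B`: the entry `(i, j)` is
`⟨aᵢ, bⱼ⟩` for the `i`-th eigenvector `aᵢ` of `A` and the `j`-th eigenvector `bⱼ` of `B`. -/
noncomputable def eigenbasisOverlap (hA : A.IsHermitian) (hB : B.IsHermitian) : Matrix m m ℂ :=
  star (hA.eigenvectorUnitary : Matrix m m ℂ) * hB.eigenvectorUnitary

lemma eigenbasisOverlap_mem_unitaryGroup (hA : A.IsHermitian) (hB : B.IsHermitian) :
    eigenbasisOverlap hA hB ∈ unitaryGroup m ℂ :=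
  mul_mem (Unitary.star_mem hA.eigenvectorUnitary.2) hB.eigenvectorUnitary.2

lemma star_eigenvectorUnitary_mul (hA : A.IsHermitian) :
    star (hA.eigenvectorUnitary : Matrix m m ℂ) * A =
      diagonal (fun i => (hA.eigenvalues i : ℂ)) *
        star (hA.eigenvectorUnitary : Matrix m m ℂ) := by
  have spectral := mfun_eq_conj_diagonal hA id
  rw [mfun_id hA] at spectral
  refine (congrArg (star (hA.eigenvectorUnitary : Matrix m m ℂ) * ·) spectral).trans ?_
  simp only [← mul_assoc, Unitary.coe_star_mul_self, one_mul, id]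

lemma mul_eigenvectorUnitary (hA : A.IsHermitian) :
    A * hA.eigenvectorUnitary =
      hA.eigenvectorUnitary * diagonal (fun i => (hA.eigenvalues i : ℂ)) := by
  have spectral := mfun_eq_conj_diagonal hA id
  rw [mfun_id hA] at spectral
  refine (congrArg (· * (hA.eigenvectorUnitary : Matrix m m ℂ)) spectral).trans ?_
  simp only [mul_assoc, Unitary.coe_star_mul_self, mul_one, id]

lemma star_eigenvectorUnitary_mul_sub_mul_apply (hA : A.IsHermitian) (hB : B.IsHermitian)
    (i j : m) :
    (star (hA.eigenvectorUnitary : Matrix m m ℂ) * (A - B) * hB.eigenvectorUnitary) i j =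
      ((hA.eigenvalues i - hB.eigenvalues j : ℝ) : ℂ) * eigenbasisOverlap hA hB i j := by
  rw [mul_sub, sub_mul, star_eigenvectorUnitary_mul, mul_assoc, mul_assoc, mul_eigenvectorUnitary,
    ← mul_assoc (star _), ← eigenbasisOverlap, Matrix.sub_apply, diagonal_mul, mul_diagonal]
  push_cast
  ring

lemma trace_mul_sub_eq_sum (hA : A.IsHermitian) (hB : B.IsHermitian) (G : Matrix m m ℂ) :
    (G * (A - B)).trace = ∑ i, ∑ j, ((hA.eigenvalues i - hB.eigenvalues j : ℝ) : ℂ) *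
      eigenbasisOverlap hA hB i j *
        (star (hB.eigenvectorUnitary : Matrix m m ℂ) * G * hA.eigenvectorUnitary) j i := by
  set U := (hA.eigenvectorUnitary : Matrix m m ℂ)
  set V := (hB.eigenvectorUnitary : Matrix m m ℂ)
  have hU : U * star U = 1 := Unitary.coe_mul_star_self _
  have hV : V * star V = 1 := Unitary.coe_mul_star_self _
  calc (G * (A - B)).trace
      = ((U * star U) * (A - B) * (V * star V) * G).trace := by
        rw [hU, hV, one_mul, mul_one, trace_mul_comm]
    _ = (U * (star U * (A - B) * V * (star V * G))).trace := by simp only [mul_assoc]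
    _ = ((star U * (A - B) * V) * (star V * G * U)).trace := by
        rw [trace_mul_comm, mul_assoc (star U * (A - B) * V)]
    _ = _ := by simp only [trace, diag_apply, mul_apply (M := star U * (A - B) * V),
        U, V, star_eigenvectorUnitary_mul_sub_mul_apply]

lemma trace_mfun_mul_mfun (hA : A.IsHermitian) (hB : B.IsHermitian) (f g : ℝ → ℝ) :
    (mfun f A * mfun g B).trace = ∑ i, ∑ j,
      ((‖eigenbasisOverlap hA hB i j‖ ^ 2 * (f (hA.eigenvalues i) * g (hB.eigenvalues j)) : ℝ) :
        ℂ) := by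
  set U := (hA.eigenvectorUnitary : Matrix m m ℂ)
  set V := (hB.eigenvectorUnitary : Matrix m m ℂ)
  set C := eigenbasisOverlap hA hB with hC
  set P : Matrix m m ℂ := diagonal fun i => (f (hA.eigenvalues i) : ℂ)
  set Q : Matrix m m ℂ := diagonal fun j => (g (hB.eigenvalues j) : ℂ)
  calc (mfun f A * mfun g B).trace
      = (U * (P * (star U * V) * Q * star V)).trace := by
        rw [mfun_eq_conj_diagonal hA, mfun_eq_conj_diagonal hB]
        simp only [mul_assoc, P, Q, U, V]
    _ = (P * C * Q * star C).trace := by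
        rw [trace_mul_comm, hC, eigenbasisOverlap, star_mul, star_star, ← mul_assoc _ (star V)]
    _ = _ := by
        simp only [trace, diag_apply, mul_apply (M := P * C * Q)]
        refine Finset.sum_congr rfl fun i _ => Finset.sum_congr rfl fun j _ => ?_
        rw [mul_diagonal, diagonal_mul, star_apply, RCLike.star_def]
        push_cast
        rw [← Complex.mul_conj']
        ring

end FunctionalCalculus

section TraceNorm

variable {A : Matrix m m ℂ}

lemma trace_mfun_abs (hA : A.IsHermitian) : (mfun (|·|) A).trace = (traceNorm A : ℂ) := by
  rw [trace_mfun hA, traceNorm, dif_pos hA, Complex.ofReal_sum]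

lemma traceNorm_smul (hA : A.IsHermitian) (c : ℝ) : traceNorm (c • A) = |c| * traceNorm A := by
  have mfun_abs_smul : mfun (|·|) (c • A) = |c| • mfun (|·|) A := by
    simp only [mfun_eq_cfc]
    rw [← cfc_comp_const_mul c (|·|) A (by fun_prop) hA.isSelfAdjoint,
      ← cfc_const_mul |c| (|·|) A (by fun_prop)]
    simp only [abs_mul]
  have := congrArg Matrix.trace mfun_abs_smul
  rw [trace_smul, trace_mfun_abs (hA.smul (IsSelfAdjoint.all c)), trace_mfun_abs hA,
    Complex.real_smul] at this
  exact_mod_cast this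

lemma exists_unitary_trace_mul_eq_traceNorm (hA : A.IsHermitian) :
    ∃ G ∈ unitaryGroup m ℂ, (G * A).trace = (traceNorm A : ℂ) := by
  -- `SignType.sign` vanishes at `0`, so it would only give a partial isometry.
  let sgn : ℝ → ℝ := fun u => if 0 ≤ u then 1 else -1
  have sgn_mul_self (u : ℝ) : sgn u * u = |u| := by
    by_cases hu : 0 ≤ u
    · simp [sgn, hu, abs_of_nonneg]
    · simp [sgn, hu, abs_of_neg (not_le.1 hu)]
  refine ⟨mfun sgn A, ?_, ?_⟩
  · rw [mfun_eq_cfc]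
    refine (cfc_unitary_iff sgn A hA.isSelfAdjoint (continuousOn_spectrum sgn A)).2 fun u _ => ?_
    by_cases hu : 0 ≤ u <;> simp [sgn, hu]
  · nth_rw 2 [← mfun_id hA]
    simp only [mfun_mul_mfun, id, sgn_mul_self]
    exact trace_mfun_abs hA

end TraceNorm

section RelativeEntropy

variable {A B : Matrix m m ℂ}

lemma mul_matLog_self (hA : A.IsHermitian) :
    A * matLog A = mfun (fun u => u * Real.log u) A := by
  nth_rw 1 [← mfun_id hA]
  exact mfun_mul_mfun id Real.log A

lemma re_trace_eq_sum_eigenvalues (hA : A.IsHermitian) : A.trace.re = ∑ i, hA.eigenvalues i := by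
  rw [hA.trace_eq_sum_eigenvalues, Complex.re_sum]
  rfl

lemma relEntropy_sub_trace_eq_sum (hA : A.IsHermitian) (hB : B.IsHermitian) :
    relEntropy A B - (A.trace.re - B.trace.re) =
      ∑ i, ∑ j, ‖eigenbasisOverlap hA hB i j‖ ^ 2 *
        entropyDivergence (hA.eigenvalues i) (hB.eigenvalues j) := by
  have entropy_term : (A * matLog A).trace.re =
      ∑ i, hA.eigenvalues i * Real.log (hA.eigenvalues i) := by
    rw [mul_matLog_self hA, trace_mfun hA, ← Complex.ofReal_sum, Complex.ofReal_re]
  have cross_term : (A * matLog B).trace.re = ∑ i, ∑ j, ‖eigenbasisOverlap hA hB i j‖ ^ 2 *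
      (hA.eigenvalues i * Real.log (hB.eigenvalues j)) := by
    nth_rw 1 [← mfun_id hA]
    rw [matLog, trace_mfun_mul_mfun hA hB]
    simp only [← Complex.ofReal_sum, Complex.ofReal_re, id]
  have marginals := sum_norm_sq_mul_add (eigenbasisOverlap_mem_unitaryGroup hA hB)
    (fun i => hA.eigenvalues i * Real.log (hA.eigenvalues i) - hA.eigenvalues i) hB.eigenvalues
  rw [relEntropy, mul_sub, trace_sub, Complex.sub_re, entropy_term, cross_term,
    re_trace_eq_sum_eigenvalues hA, re_trace_eq_sum_eigenvalues hB]
  rw [Finset.sum_sub_distrib] at marginals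
  calc _ = ∑ i, ∑ j, ‖eigenbasisOverlap hA hB i j‖ ^ 2 *
          (hA.eigenvalues i * Real.log (hA.eigenvalues i) - hA.eigenvalues i +
            hB.eigenvalues j) -
        ∑ i, ∑ j, ‖eigenbasisOverlap hA hB i j‖ ^ 2 *
          (hA.eigenvalues i * Real.log (hB.eigenvalues j)) := by rw [marginals]; ring
    _ = _ := by
      simp only [← Finset.sum_sub_distrib, entropyDivergence]
      refine Finset.sum_congr rfl fun i _ => Finset.sum_congr rfl fun j _ => ?_
      ring

lemma eigenvalue_eq_zero_or_overlap_eq_zero (hA : A.IsHermitian) (hB : B.IsHermitian)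
    (hker : ∀ v, B *ᵥ v = 0 → A *ᵥ v = 0) (i j : m) (hj : hB.eigenvalues j = 0) :
    hA.eigenvalues i = 0 ∨ eigenbasisOverlap hA hB i j = 0 := by
  have column_eq_zero : (A * (hB.eigenvectorUnitary : Matrix m m ℂ)).col j = 0 := by
    rw [← mulVec_single_one, ← mulVec_mulVec, hB.eigenvectorUnitary_mulVec]
    exact hker _ (by rw [hB.mulVec_eigenvectorBasis, hj, zero_smul])
  have weighted_entry : (hA.eigenvalues i : ℂ) * eigenbasisOverlap hA hB i j = 0 := by
    rw [eigenbasisOverlap, ← diagonal_mul (fun i => (hA.eigenvalues i : ℂ)), ← mul_assoc,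
      ← star_eigenvectorUnitary_mul, mul_assoc, mul_apply]
    exact Finset.sum_eq_zero fun k _ => mul_eq_zero_of_right _ (congrFun column_eq_zero k)
  exact_mod_cast mul_eq_zero.1 weighted_entry

lemma re_trace_sub_le_relEntropy (hA : A.PosSemidef) (hB : B.PosSemidef)
    (hker : ∀ v, B *ᵥ v = 0 → A *ᵥ v = 0) : A.trace.re - B.trace.re ≤ relEntropy A B := by
  rw [← sub_nonneg, relEntropy_sub_trace_eq_sum hA.isHermitian hB.isHermitian]
  refine Finset.sum_nonneg fun i _ => Finset.sum_nonneg fun j _ => ?_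
  by_cases hC : eigenbasisOverlap hA.isHermitian hB.isHermitian i j = 0
  · simp [hC]
  · exact mul_nonneg (sq_nonneg _) <|
      entropyDivergence_nonneg (hA.eigenvalues_nonneg i) (hB.eigenvalues_nonneg j) fun hj =>
        (eigenvalue_eq_zero_or_overlap_eq_zero _ _ hker i j hj).resolve_right hC

theorem sq_traceNorm_sub_le_relEntropy_mul (hA : A.PosSemidef) (hB : B.PosSemidef)
    (hker : ∀ v, B *ᵥ v = 0 → A *ᵥ v = 0) :
    traceNorm (A - B) ^ 2 ≤ (relEntropy A B - (A.trace.re - B.trace.re)) *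
      ((2 * A.trace.re + 4 * B.trace.re) / 3) := by
  obtain ⟨G, hG, hGtrace⟩ :=
    exists_unitary_trace_mul_eq_traceNorm (hA.isHermitian.sub hB.isHermitian)
  have hK : star (hB.isHermitian.eigenvectorUnitary : Matrix m m ℂ) * G *
      hA.isHermitian.eigenvectorUnitary ∈ unitaryGroup m ℂ :=
    mul_mem (mul_mem (Unitary.star_mem hB.isHermitian.eigenvectorUnitary.2) hG)
      hA.isHermitian.eigenvectorUnitary.2
  rw [← sq_abs, ← Real.norm_eq_abs, ← Complex.norm_real, ← hGtrace,
    trace_mul_sub_eq_sum hA.isHermitian hB.isHermitian,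
    relEntropy_sub_trace_eq_sum hA.isHermitian hB.isHermitian,
    re_trace_eq_sum_eigenvalues hA.isHermitian, re_trace_eq_sum_eigenvalues hB.isHermitian]
  exact sq_norm_sum_sub_mul_le hK hA.eigenvalues_nonneg hB.eigenvalues_nonneg
    (eigenvalue_eq_zero_or_overlap_eq_zero _ _ hker)

theorem sq_traceNorm_sub_le_of_re_trace_le (hA : A.PosSemidef) (hB : B.PosSemidef)
    (hker : ∀ v, B *ᵥ v = 0 → A *ᵥ v = 0) {t : ℝ} (hAt : A.trace.re ≤ t) (hBt : B.trace.re ≤ t) :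
    traceNorm (A - B) ^ 2 ≤ 2 * t * (relEntropy A B - (A.trace.re - B.trace.re)) := by
  have klein := sub_nonneg.2 (re_trace_sub_le_relEntropy hA hB hker)
  calc traceNorm (A - B) ^ 2
      ≤ (relEntropy A B - (A.trace.re - B.trace.re)) *
          ((2 * A.trace.re + 4 * B.trace.re) / 3) := sq_traceNorm_sub_le_relEntropy_mul hA hB hker
    _ ≤ (relEntropy A B - (A.trace.re - B.trace.re)) * (2 * t) := by gcongr; linarith
    _ = _ := mul_comm _ _

end RelativeEntropy

section Mixtures

lemma vnEntropy_mix_sub (x : ℝ) (ρ₁ ρ₂ : Matrix m m ℂ) :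
    vnEntropy (x • ρ₁ + (1 - x) • ρ₂) - x * vnEntropy ρ₁ - (1 - x) * vnEntropy ρ₂ =
      x * relEntropy ρ₁ (x • ρ₁ + (1 - x) • ρ₂) +
        (1 - x) * relEntropy ρ₂ (x • ρ₁ + (1 - x) • ρ₂) := by
  generalize hL : matLog (x • ρ₁ + (1 - x) • ρ₂) = L
  simp only [vnEntropy, relEntropy, hL, add_mul, mul_sub, smul_mul_assoc, trace_add, trace_sub,
    trace_smul, Complex.add_re, Complex.sub_re, Complex.smul_re, smul_eq_mul]
  ring

lemma sq_traceNorm_sub_mix_le {x : ℝ} (hx : x ∈ Set.Ioo (0 : ℝ) 1) {ρ₁ ρ₂ : Matrix m m ℂ}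
    (h1 : ρ₁.PosSemidef) (h2 : ρ₂.PosSemidef) {t : ℝ} (ht1 : ρ₁.trace.re ≤ t)
    (ht2 : ρ₂.trace.re ≤ t) :
    (1 - x) ^ 2 * traceNorm (ρ₁ - ρ₂) ^ 2 ≤
      2 * t * (relEntropy ρ₁ (x • ρ₁ + (1 - x) • ρ₂) -
        (1 - x) * (ρ₁.trace.re - ρ₂.trace.re)) := by
  obtain ⟨hx0, hx1⟩ := hx
  set γ := x • ρ₁ + (1 - x) • ρ₂ with hγ
  have psd1 : (x • ρ₁).PosSemidef := h1.smul hx0.le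
  have psd2 : ((1 - x) • ρ₂).PosSemidef := h2.smul (sub_nonneg.2 hx1.le)
  have hker (v : m → ℂ) (hv : γ *ᵥ v = 0) : ρ₁ *ᵥ v = 0 := by
    have := mulVec_eq_zero_of_posSemidef_add psd1 psd2 hv
    rw [smul_mulVec] at this
    exact (smul_eq_zero.1 this).resolve_left hx0.ne'
  have trace_mix : γ.trace.re = x * ρ₁.trace.re + (1 - x) * ρ₂.trace.re := by
    simp only [hγ, trace_add, trace_smul, Complex.add_re, Complex.smul_re, smul_eq_mul]
  have pinsker := sq_traceNorm_sub_le_of_re_trace_le h1 (psd1.add psd2) hker ht1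
    (by rw [trace_mix]; nlinarith)
  rw [show ρ₁ - γ = (1 - x) • (ρ₁ - ρ₂) by rw [hγ]; module,
    traceNorm_smul (h1.isHermitian.sub h2.isHermitian), mul_pow, sq_abs, trace_mix] at pinsker
  linarith

end Mixtures

theorem concavity_lower_bound_pinsker_general {x : ℝ} (hx : x ∈ Set.Ioo (0 : ℝ) 1)
    {ρ₁ ρ₂ : Matrix m m ℂ} (h1 : ρ₁.PosSemidef) (h2 : ρ₂.PosSemidef) {t : ℝ}
    (ht1 : ρ₁.trace.re ≤ t) (ht2 : ρ₂.trace.re ≤ t) :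
    x * (1 - x) * traceNorm (ρ₁ - ρ₂) ^ 2 ≤ 2 * t *
      (vnEntropy (x • ρ₁ + (1 - x) • ρ₂) - x * vnEntropy ρ₁ - (1 - x) * vnEntropy ρ₂) := by
  have pinsker1 := sq_traceNorm_sub_mix_le hx h1 h2 ht1 ht2
  have pinsker2 := sq_traceNorm_sub_mix_le (x := 1 - x)
    ⟨sub_pos.2 hx.2, sub_lt_self 1 hx.1⟩ h2 h1 ht2 ht1
  have traceNorm_comm : traceNorm (ρ₂ - ρ₁) = traceNorm (ρ₁ - ρ₂) := by
    rw [← neg_sub, ← neg_one_smul ℝ, traceNorm_smul (h1.isHermitian.sub h2.isHermitian)]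
    simp
  rw [sub_sub_cancel, traceNorm_comm, add_comm ((1 - x) • ρ₂)] at pinsker2
  rw [vnEntropy_mix_sub]
  linarith [mul_le_mul_of_nonneg_left pinsker1 hx.1.le,
    mul_le_mul_of_nonneg_left pinsker2 (sub_nonneg.2 hx.2.le)]

theorem concavity_lower_bound_pinsker (n : ℕ) (hn : 1 ≤ n) (x : ℝ) (hx : x ∈ Set.Ioo (0:ℝ) 1)
    (ρ₁ ρ₂ : Matrix (Fin n) (Fin n) ℂ) (h1 : IsDensity ρ₁) (h2 : IsDensity ρ₂) :
    vnEntropy (x • ρ₁ + (1 - x) • ρ₂) - x * vnEntropy ρ₁ - (1 - x) * vnEntropy ρ₂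
      ≥ (1 / 2) * x * (1 - x) * traceNorm (ρ₁ - ρ₂) ^ 2 := by
  linarith [concavity_lower_bound_pinsker_general hx h1.1 h2.1 (t := 1) (by simp [h1.2])
    (by simp [h2.2])]
end

section
/- Let n ≥ 1 and let ρ₁, ρ₂ be density matrices (n×n complex positive semidefinite matrices of trace 1) such that ρ_Av := (ρ₁ + ρ₂)/2 is positive definite. Then (1/2)·[ log Tr(ρ₁² · ρ_Av⁻¹) + log Tr(ρ₂² · ρ_Av⁻¹) ] ≤ log 2. -/
/-!
If `0 ≤ r ≤ u` with `u` invertible, then `r - r u⁻¹ r` is the sum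
`(1 - r u⁻¹) r (1 - u⁻¹ r) + r u⁻¹ (u - r) u⁻¹ r` of two positive elements, so `r u⁻¹ r ≤ r`.
In an ensemble of states `ρ i` with probabilities `p i`, each `p i • ρ i` lies below the average
`γ`, and the trace of this inequality is `Tr (ρ i² γ⁻¹) ≤ 1 / p i`. Averaging the logarithms bounds
the Rényi-2 analogue of the Holevo quantity by the Shannon entropy of `p`, which is `log 2` for two
equiprobable states.
-/

open Matrix ComplexOrder

section Order

open scoped MatrixOrder

theorem mul_units_inv_mul_le_self {R : Type*} [Ring R] [PartialOrder R] [StarRing R]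
    [StarOrderedRing R] {r : R} {u : Rˣ} (hr : 0 ≤ r) (hru : r ≤ u) : r * ↑u⁻¹ * r ≤ r := by
  have hr_star : star r = r := IsSelfAdjoint.of_nonneg hr
  have hu_star : star u = u := Units.ext (IsSelfAdjoint.of_nonneg (hr.trans hru))
  have hinv_star : star (↑u⁻¹ : R) = ↑u⁻¹ := by rw [← Units.coe_star, star_inv, hu_star]
  have h_first : 0 ≤ (1 - r * ↑u⁻¹) * r * (1 - ↑u⁻¹ * r) := by
    simpa [hr_star, hinv_star] using star_left_conjugate_nonneg hr (1 - ↑u⁻¹ * r)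
  have h_second : 0 ≤ r * ↑u⁻¹ * (u - r) * (↑u⁻¹ * r) := by
    simpa [hr_star, hinv_star] using star_left_conjugate_nonneg (sub_nonneg.mpr hru) (↑u⁻¹ * r)
  have h_decomp : r - r * ↑u⁻¹ * r =
      (1 - r * ↑u⁻¹) * r * (1 - ↑u⁻¹ * r) + r * ↑u⁻¹ * (u - r) * (↑u⁻¹ * r) := by
    rw [mul_sub (r * ↑u⁻¹), Units.inv_mul_cancel_right]
    noncomm_ring
  exact sub_nonneg.mp (h_decomp ▸ add_nonneg h_first h_second)

variable {𝕜 m : Type*} [RCLike 𝕜] [Fintype m] [DecidableEq m]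

theorem trace_mul_self_mul_inv_le {A B : Matrix m m 𝕜} (hA : 0 ≤ A)
    (hAB : A ≤ B) (hB : IsUnit B) : (A * A * B⁻¹).trace ≤ A.trace := by
  obtain ⟨u, rfl⟩ := hB
  have h_trace := (le_iff.mp (mul_units_inv_mul_le_self hA hAB)).trace_nonneg
  rwa [trace_sub, sub_nonneg, trace_mul_cycle, coe_units_inv] at h_trace

theorem trace_mul_self_mul_inv_pos {A B : Matrix m m 𝕜} (hA : A.IsHermitian) (hA_ne_zero : A ≠ 0)
    (hB : B.PosDef) : 0 < (A * A * B⁻¹).trace := by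
  obtain ⟨C, hC⟩ := CStarAlgebra.nonneg_iff_eq_star_mul_self.mp hB.inv.posSemidef.nonneg
  have h_gram : (A * A * B⁻¹).trace = ((C * A)ᴴ * (C * A)).trace := by
    rw [← trace_mul_cycle, conjTranspose_mul, hA.eq, hC, star_eq_conjTranspose]
    simp only [Matrix.mul_assoc]
  have hCA : C * A ≠ 0 := fun h_zero ↦ hA_ne_zero <|
    hB.inv.isUnit.mul_left_cancel (by simp [hC, Matrix.mul_assoc, h_zero])
  rw [h_gram]
  exact (posSemidef_conjTranspose_mul_self (C * A)).trace_nonneg.lt_of_ne'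
    (trace_conjTranspose_mul_self_eq_zero_iff.not.mpr hCA)

variable {ρ γ : Matrix m m ℂ} {p : ℝ}

theorem IsDensity.re_trace_mul_self_mul_inv_le (hρ : IsDensity ρ) (hγ : IsUnit γ) (hp : 0 < p)
    (hργ : p • ρ ≤ γ) : (ρ * ρ * γ⁻¹).trace.re ≤ p⁻¹ := by
  have h_scaled : p * (ρ * ρ * γ⁻¹).trace.re ≤ 1 := by
    simpa [hρ.2, hp] using Complex.re_le_re
      (trace_mul_self_mul_inv_le (hρ.1.smul hp.le).nonneg hργ hγ)
  simpa using (le_div_iff₀' hp).mpr h_scaled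

theorem IsDensity.ne_zero (hρ : IsDensity ρ) : ρ ≠ 0 := by
  rintro rfl
  simpa using hρ.2

theorem IsDensity.log_re_trace_mul_self_mul_inv_le (hρ : IsDensity ρ) (hγ : γ.PosDef) (hp : 0 < p)
    (hργ : p • ρ ≤ γ) : Real.log (ρ * ρ * γ⁻¹).trace.re ≤ -Real.log p := by
  have h_trace_pos := trace_mul_self_mul_inv_pos hρ.1.isHermitian hρ.ne_zero hγ
  rw [← Real.log_inv]
  exact Real.log_le_log (Complex.lt_def.mp h_trace_pos).1
    (hρ.re_trace_mul_self_mul_inv_le hγ.isUnit hp hργ)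

end Order

theorem renyi2_half_bound_general {ι m : Type*} [Fintype ι] [Fintype m] [DecidableEq m]
    {p : ι → ℝ} (hp : ∀ i, 0 ≤ p i) {ρ : ι → Matrix m m ℂ} (hρ : ∀ i, IsDensity (ρ i))
    (hAv : (∑ i, p i • ρ i).PosDef) :
    ∑ i, p i * Real.log (ρ i * ρ i * (∑ j, p j • ρ j)⁻¹).trace.re ≤
      ∑ i, Real.negMulLog (p i) := by
  open scoped MatrixOrder in
  have h_le_average (i : ι) : p i • ρ i ≤ ∑ j, p j • ρ j :=
    Finset.single_le_sum (fun j _ ↦ ((hρ j).1.smul (hp j)).nonneg) (Finset.mem_univ i)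
  refine Finset.sum_le_sum fun i _ ↦ ?_
  rw [Real.negMulLog, neg_mul_comm]
  rcases (hp i).eq_or_lt with h_zero | h_pos
  · simp [← h_zero]
  · gcongr
    exact (hρ i).log_re_trace_mul_self_mul_inv_le hAv h_pos (h_le_average i)

theorem renyi2_half_bound (n : ℕ) (hn : 1 ≤ n)
    (ρ₁ ρ₂ : Matrix (Fin n) (Fin n) ℂ) (h1 : IsDensity ρ₁) (h2 : IsDensity ρ₂)
    (hAv : ((1 / 2 : ℝ) • (ρ₁ + ρ₂)).PosDef) :
    (1 / 2) * (Real.log (Matrix.trace (ρ₁ * ρ₁ * ((1 / 2 : ℝ) • (ρ₁ + ρ₂))⁻¹)).re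
        + Real.log (Matrix.trace (ρ₂ * ρ₂ * ((1 / 2 : ℝ) • (ρ₁ + ρ₂))⁻¹)).re)
      ≤ Real.log 2 := by
  have hp : ∀ i, (0 : ℝ) ≤ ![1 / 2, 1 / 2] i := by simp [Fin.forall_fin_two]
  have hρ : ∀ i, IsDensity (![ρ₁, ρ₂] i) := Fin.forall_fin_two.mpr ⟨h1, h2⟩
  have h_average : ∑ i, ![(1 / 2 : ℝ), 1 / 2] i • ![ρ₁, ρ₂] i = (1 / 2 : ℝ) • (ρ₁ + ρ₂) := by
    simp [smul_add]
  simpa [h_average, mul_add, Real.negMulLog, ← two_mul] using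
    renyi2_half_bound_general hp hρ (h_average ▸ hAv)
end
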